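/- Let α ∈ (0,2), n ∈ ℤ with n ≠ 0, and x ∈ ℝ. Then the function y ↦ (λ_n'(x−y) − λ_n'(x+y))·y^(−α) is absolutely integrable on (0,∞), and (c_α/α)·∫₀^∞ (λ_n'(x−y) − λ_n'(x+y))·y^(−α) dy = −(2·Γ(1+α)/(i·sgn(n)·x + 1)^(1+α)) · ∑_{k=0}^{|n|−1} C(|n|, k+1)·C(−1−α, k)·(2/(i·sgn(n)·x + 1))^k. (The right-hand side is the terminating hypergeometric expression −(2|n|Γ(1+α)/(i·sgn(n)x+1)^(1+α))·₂F₁(1−|n|, 1+α; 2; 2/(i·sgn(n)x+1)).) -/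

import Mathlib

open MeasureTheory Finset

/-- The constant `c_α = α·2^(α−1)·Γ(1/2+α/2)/(√π·Γ(1−α/2))`. -/
noncomputable def cFrac (α : ℝ) : ℝ :=
  α * 2 ^ (α - 1) * Real.Gamma (1 / 2 + α / 2) / (Real.sqrt Real.pi * Real.Gamma (1 - α / 2))

/-- The complex Higgins function `λ_n(x) = ((ix−1)/(ix+1))^n`. -/
noncomputable def higgins (n : ℤ) (x : ℝ) : ℂ :=
  ((Complex.I * (x : ℂ) - 1) / (Complex.I * (x : ℂ) + 1)) ^ n

/-- The derivative `λ_n'`. -/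
noncomputable def higgins' (n : ℤ) (x : ℝ) : ℂ := deriv (higgins n) x

/-- The complex Christov function `μ_n(x) = (ix−1)^n/(ix+1)^(n+1)`. -/
noncomputable def christov (n : ℤ) (x : ℝ) : ℂ :=
  (Complex.I * (x : ℂ) - 1) ^ n / (Complex.I * (x : ℂ) + 1) ^ (n + 1)

/-- The derivative `μ_n'`. -/
noncomputable def christov' (n : ℤ) (x : ℝ) : ℂ := deriv (christov n) x

/-- Generalized binomial coefficient `C(z,k) = z(z−1)⋯(z−k+1)/k!` over `ℂ`. -/
noncomputable def gbinom (z : ℂ) (k : ℕ) : ℂ :=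
  (∏ i ∈ Finset.range k, (z - (i : ℂ))) / (k.factorial : ℂ)

/-- Generalized binomial coefficient `C(z,k) = z(z−1)⋯(z−k+1)/k!` over `ℝ`. -/
noncomputable def gbinomR (z : ℝ) (k : ℕ) : ℝ :=
  (∏ i ∈ Finset.range k, (z - (i : ℝ))) / (k.factorial : ℝ)

/-- Rising factorial (Pochhammer symbol) `(z)_k = z(z+1)⋯(z+k−1)` over `ℂ`. -/
noncomputable def poch (z : ℂ) (k : ℕ) : ℂ := ∏ i ∈ Finset.range k, (z + (i : ℂ))

/-- `G_α(l) = (1/(l+1))·∑_{k=0}^{l} C(l+1,k+1)·C(−1−α,k)·2^k = ₂F₁(−l, 1+α; 2; 2)`, over `ℂ`. -/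
noncomputable def Gc (α : ℝ) (l : ℕ) : ℂ :=
  (1 / ((l : ℂ) + 1)) * ∑ k ∈ Finset.range (l + 1),
    gbinom ((l : ℂ) + 1) (k + 1) * gbinom (-1 - (α : ℂ)) k * 2 ^ k

/-- `G_α(l) = (1/(l+1))·∑_{k=0}^{l} C(l+1,k+1)·C(−1−α,k)·2^k = ₂F₁(−l, 1+α; 2; 2)`, over `ℝ`. -/
noncomputable def GR (α : ℝ) (l : ℕ) : ℝ :=
  (1 / ((l : ℝ) + 1)) * ∑ k ∈ Finset.range (l + 1),
    gbinomR ((l : ℝ) + 1) (k + 1) * gbinomR (-1 - α) k * 2 ^ k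

/-- `H_α(l) = ∑_{k=0}^{l} C(l,k)·C(−1−α,k)·2^k = ₂F₁(−l, 1+α; 1; 2)`, over `ℂ`. -/
noncomputable def Hc (α : ℝ) (l : ℕ) : ℂ :=
  ∑ k ∈ Finset.range (l + 1), gbinom (l : ℂ) k * gbinom (-1 - (α : ℂ)) k * 2 ^ k

/-- `H_α(l) = ∑_{k=0}^{l} C(l,k)·C(−1−α,k)·2^k = ₂F₁(−l, 1+α; 1; 2)`, over `ℝ`. -/
noncomputable def HR (α : ℝ) (l : ℕ) : ℝ :=
  ∑ k ∈ Finset.range (l + 1), gbinomR (l : ℝ) k * gbinomR (-1 - α) k * 2 ^ k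

/-- `arccot(x) = π/2 − arctan(x) ∈ (0,π)`. -/
noncomputable def arccot (x : ℝ) : ℝ := Real.pi / 2 - Real.arctan x

/-!
By the binomial expansion of `(1 - 2 / (i x + 1)) ^ |n|`, the derivative of a Higgins function is a
combination of powers of `i x + 1` (or of `-i x + 1`, by reflection, for `n < 0`). The Gamma
integral `Γ(a) w ^ (-a) = ∫₀^∞ t ^ (a - 1) exp (-w t) dt`, valid for `Re w > 0`, turns differences
of such powers into sine transforms:
`(i (x - y) + 1) ^ (-a) - (i (x + y) + 1) ^ (-a) =
  (2i / Γ(a)) ∫₀^∞ sin (y t) t ^ (a - 1) exp (-(i x + 1) t) dt`.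
Since `∫₀^∞ y ^ (-α) sin (y t) dy` is a multiple of `t ^ (α - 1)`, integrating against `y ^ (-α)`
gives another Gamma integral. That sine integral converges only conditionally for `α ≤ 1`, so the
interchange goes through `Γ(α) y ^ (-α) = ∫₀^∞ s ^ (α - 1) exp (-s y) ds` and
`∫₀^∞ exp (-s y) sin (y t) dy = t / (s ^ 2 + t ^ 2)`, for which Fubini's theorem applies.
-/

open Filter Asymptotics
open scoped Topology

section KernelFubini

variable {X Y E : Type*} [MeasurableSpace X] [MeasurableSpace Y] [NormedAddCommGroup E]
  [NormedSpace ℝ E] {μ : Measure X} {ν : Measure Y} [SFinite μ] [SFinite ν]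
  {s : Set X} {t : Set Y} {k : X → Y → ℝ} {m : Y → ℝ} {f : Y → E}

theorem integrable_prod_nonneg_kernel_smul (hs : MeasurableSet s) (ht : MeasurableSet t)
    (hk : Measurable (Function.uncurry k)) (hk_nonneg : ∀ x ∈ s, ∀ y ∈ t, 0 ≤ k x y)
    (hk_int : ∀ y ∈ t, IntegrableOn (k · y) s μ) (hkm : ∀ y ∈ t, ∫ x in s, k x y ∂μ = m y)
    (hf : AEStronglyMeasurable f (ν.restrict t)) (hmf : IntegrableOn (fun y => m y • f y) t ν) :
    Integrable (Function.uncurry fun x y => k x y • f y)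
      ((μ.restrict s).prod (ν.restrict t)) := by
  have hmeas : AEStronglyMeasurable (Function.uncurry fun x y => k x y • f y)
      ((μ.restrict s).prod (ν.restrict t)) :=
    hk.aestronglyMeasurable.smul hf.comp_snd
  have hnorm : ∀ y ∈ t, ‖m y • f y‖ = ∫ x in s, ‖k x y • f y‖ ∂μ := fun y hy => by
    have hm_nonneg : 0 ≤ m y :=
      hkm y hy ▸ setIntegral_nonneg hs fun x hx => hk_nonneg x hx y hy
    rw [norm_smul, Real.norm_of_nonneg hm_nonneg, ← hkm y hy, ← integral_mul_const]
    refine setIntegral_congr_fun hs fun x hx => ?_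
    simp only [norm_smul, Real.norm_of_nonneg (hk_nonneg x hx y hy)]
  refine (integrable_prod_iff' hmeas).2 ⟨?_, (integrableOn_congr_fun hnorm ht).1 hmf.norm⟩
  filter_upwards [ae_restrict_mem ht] with y hy using (hk_int y hy).smul_const (f y)

theorem integral_integral_kernel_smul [CompleteSpace E] (ht : MeasurableSet t)
    (hkm : ∀ y ∈ t, ∫ x in s, k x y ∂μ = m y)
    (h : Integrable (Function.uncurry fun x y => k x y • f y)
      ((μ.restrict s).prod (ν.restrict t))) :
    ∫ x in s, ∫ y in t, k x y • f y ∂ν ∂μ = ∫ y in t, m y • f y ∂ν := by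
  rw [integral_integral_swap h]
  refine setIntegral_congr_fun ht fun y hy => ?_
  simp only [integral_smul_const, hkm y hy]

end KernelFubini

section RealIntegrals

theorem integrableOn_rpow_sub_one_mul_exp_neg_mul {a r : ℝ} (ha : 0 < a) (hr : 0 < r) :
    IntegrableOn (fun t : ℝ => t ^ (a - 1) * Real.exp (-(r * t))) (Set.Ioi 0) := by
  simpa only [Real.rpow_one, neg_mul] using
    integrableOn_rpow_mul_exp_neg_mul_rpow (s := a - 1) (by linarith) one_pos hr

theorem integral_rpow_sub_one_mul_exp_neg_mul {a r : ℝ} (ha : 0 < a) (hr : 0 < r) :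
    ∫ t in Set.Ioi (0 : ℝ), t ^ (a - 1) * Real.exp (-(r * t)) = Real.Gamma a * r ^ (-a) := by
  rw [Real.integral_rpow_mul_exp_neg_mul_Ioi ha hr, one_div, Real.inv_rpow hr.le,
    Real.rpow_neg hr.le, mul_comm]

theorem integral_exp_neg_mul_sin {s : ℝ} (hs : 0 < s) (t : ℝ) :
    ∫ y in Set.Ioi (0 : ℝ), Real.exp (-(s * y)) * Real.sin (y * t) = t / (s ^ 2 + t ^ 2) := by
  have hre : (-(s : ℂ) + t * Complex.I).re < 0 := by simpa using hs
  have him : ∀ y : ℝ, Real.exp (-(s * y)) * Real.sin (y * t) =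
      RCLike.im (Complex.exp ((-(s : ℂ) + t * Complex.I) * y)) := fun y => by
    simp [Complex.exp_im, mul_comm]
  simp only [him]
  rw [integral_im (integrableOn_exp_mul_complex_Ioi hre 0), integral_exp_mul_complex_Ioi hre]
  simp [Complex.normSq_apply, pow_two, neg_div]

variable {p t : ℝ}

theorem integrableOn_rpow_mul_gaussian (hp : 0 < p) {u : ℝ} (hu : 0 < u) :
    IntegrableOn (fun s : ℝ => s ^ (p - 1) * Real.exp (-u * s ^ (2 : ℝ))) (Set.Ioi 0) :=
  integrableOn_rpow_mul_exp_neg_mul_rpow (by linarith) two_pos hu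

theorem integral_rpow_mul_gaussian (hp : 0 < p) {u : ℝ} (hu : 0 < u) :
    ∫ s in Set.Ioi (0 : ℝ), s ^ (p - 1) * Real.exp (-u * s ^ (2 : ℝ)) =
      1 / 2 * Real.Gamma (p / 2) * u ^ (1 - p / 2 - 1) := by
  rw [integral_rpow_mul_exp_neg_mul_rpow two_pos (by linarith) hu, sub_add_cancel, mul_right_comm,
    mul_comm, neg_div, show 1 - p / 2 - 1 = -(p / 2) by ring]
  ring

-- The Gaussian in `s` comes from `1 / (s ^ 2 + t ^ 2) = ∫₀^∞ exp (-(s ^ 2 + t ^ 2) u) du`.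
theorem integrable_rpow_mul_gaussian_smul_exp (hp : p ∈ Set.Ioo 0 2) (ht : 0 < t) :
    Integrable (Function.uncurry fun s u : ℝ =>
        (s ^ (p - 1) * Real.exp (-u * s ^ (2 : ℝ))) • Real.exp (-(t ^ 2 * u)))
      ((volume.restrict (Set.Ioi 0)).prod (volume.restrict (Set.Ioi 0))) := by
  refine integrable_prod_nonneg_kernel_smul measurableSet_Ioi measurableSet_Ioi
    (by unfold Function.uncurry; fun_prop) (fun s hs u _ => ?_)
    (fun u hu => integrableOn_rpow_mul_gaussian hp.1 hu)
    (fun u hu => integral_rpow_mul_gaussian hp.1 hu) (by fun_prop) ?_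
  · have : 0 < s := hs
    positivity
  · simpa only [IntegrableOn, smul_eq_mul, mul_assoc] using
      ((integrableOn_rpow_sub_one_mul_exp_neg_mul (a := 1 - p / 2) (by linarith [hp.2])
        (by positivity : 0 < t ^ 2)).const_mul (1 / 2 * Real.Gamma (p / 2)))

theorem integral_rpow_mul_gaussian_smul_exp (p : ℝ) (ht : 0 < t) (s : ℝ) :
    ∫ u in Set.Ioi (0 : ℝ),
        (s ^ (p - 1) * Real.exp (-u * s ^ (2 : ℝ))) • Real.exp (-(t ^ 2 * u)) =
      s ^ (p - 1) / (s ^ 2 + t ^ 2) := by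
  have hpos : 0 < s ^ 2 + t ^ 2 := by positivity
  have hexp : ∀ u : ℝ, (s ^ (p - 1) * Real.exp (-u * s ^ (2 : ℝ))) • Real.exp (-(t ^ 2 * u)) =
      s ^ (p - 1) * Real.exp (-(s ^ 2 + t ^ 2) * u) := fun u => by
    rw [smul_eq_mul, mul_assoc, ← Real.exp_add, Real.rpow_two]
    ring_nf
  simp only [hexp, integral_const_mul]
  rw [integral_exp_mul_Ioi (neg_neg_of_pos hpos), mul_zero, Real.exp_zero, neg_div_neg_eq,
    mul_one_div]

theorem integrableOn_rpow_sub_one_mul_div_sq_add_sq (hp : p ∈ Set.Ioo 0 2) (ht : 0 < t) :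
    IntegrableOn (fun s : ℝ => s ^ (p - 1) * (t / (s ^ 2 + t ^ 2))) (Set.Ioi 0) := by
  have hint := (integrable_rpow_mul_gaussian_smul_exp hp ht).integral_prod_left.const_mul t
  simpa only [IntegrableOn, Function.uncurry_apply_pair,
    integral_rpow_mul_gaussian_smul_exp p ht, mul_div_left_comm t] using hint

theorem integral_rpow_sub_one_mul_div_sq_add_sq (hp : p ∈ Set.Ioo 0 2) (ht : 0 < t) :
    ∫ s in Set.Ioi (0 : ℝ), s ^ (p - 1) * (t / (s ^ 2 + t ^ 2)) =
      1 / 2 * Real.Gamma (p / 2) * Real.Gamma (1 - p / 2) * t ^ (p - 1) := by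
  have hrpow : t * (t ^ 2) ^ (-(1 - p / 2)) = t ^ (p - 1) := by
    rw [← Real.rpow_natCast_mul ht.le, mul_comm, ← Real.rpow_add_one ht.ne']
    ring_nf
  simp only [mul_div_left_comm _ t, ← integral_rpow_mul_gaussian_smul_exp p ht, integral_const_mul]
  rw [integral_integral_kernel_smul measurableSet_Ioi
    (fun u hu => integral_rpow_mul_gaussian hp.1 hu) (integrable_rpow_mul_gaussian_smul_exp hp ht)]
  simp only [smul_eq_mul, mul_assoc, integral_const_mul]
  rw [integral_rpow_sub_one_mul_exp_neg_mul (by linarith [hp.2]) (by positivity), ← hrpow]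
  ring

end RealIntegrals

section SineTransform

variable {E : Type*} [NormedAddCommGroup E] [NormedSpace ℝ E]

/-- The sine transform `y ↦ ∫₀^∞ sin (y * t) φ t dt` of a function on the half-line, without a
normalising constant. -/
noncomputable def sineTransform (φ : ℝ → E) (y : ℝ) : E :=
  ∫ t in Set.Ioi (0 : ℝ), Real.sin (y * t) • φ t

variable {f φ : ℝ → E} {α : ℝ}

theorem continuous_sineTransform (hφ : IntegrableOn φ (Set.Ioi 0)) :
    Continuous (sineTransform φ) := by
  refine continuous_of_dominated (bound := fun t => ‖φ t‖) (fun y => ?_) (fun y => ?_) hφ.norm ?_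
  · exact (by fun_prop : Continuous fun t : ℝ => Real.sin (y * t)).aestronglyMeasurable.smul hφ.1
  · refine ae_of_all _ fun t => ?_
    rw [norm_smul]
    exact mul_le_of_le_one_left (norm_nonneg _) (Real.abs_sin_le_one _)
  · exact ae_of_all _ fun t => by fun_prop

theorem norm_sineTransform_le (hφ : IntegrableOn (fun t => t • φ t) (Set.Ioi 0)) (y : ℝ) :
    ‖sineTransform φ y‖ ≤ |y| * ∫ t in Set.Ioi (0 : ℝ), ‖t • φ t‖ := by
  rw [← integral_const_mul]
  refine norm_integral_le_of_norm_le (hφ.norm.const_mul |y|) (ae_of_all _ fun t => ?_)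
  calc ‖Real.sin (y * t) • φ t‖ = |Real.sin (y * t)| * ‖φ t‖ := norm_smul _ _
    _ ≤ |y * t| * ‖φ t‖ := mul_le_mul_of_nonneg_right Real.abs_sin_le_abs (norm_nonneg _)
    _ = |y| * ‖t • φ t‖ := by rw [norm_smul, abs_mul, mul_assoc, Real.norm_eq_abs]

theorem integral_exp_neg_mul_smul_sineTransform [CompleteSpace E]
    (hφ : IntegrableOn φ (Set.Ioi 0)) {s : ℝ} (hs : 0 < s) :
    ∫ y in Set.Ioi (0 : ℝ), Real.exp (-(s * y)) • sineTransform φ y =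
      ∫ t in Set.Ioi (0 : ℝ), (t / (s ^ 2 + t ^ 2)) • φ t := by
  have hexp : IntegrableOn (fun y : ℝ => Real.exp (-(s * y))) (Set.Ioi 0) := by
    simpa only [neg_mul] using exp_neg_integrableOn_Ioi 0 hs
  have hint : Integrable
      (Function.uncurry fun y t : ℝ => (Real.exp (-(s * y)) * Real.sin (y * t)) • φ t)
      ((volume.restrict (Set.Ioi 0)).prod (volume.restrict (Set.Ioi 0))) := by
    have hsin : Measurable fun z : ℝ × ℝ => Real.sin (z.1 * z.2) := by fun_prop
    refine ((hexp.smul_prod hφ).bdd_smul (𝕜 := ℝ) 1 hsin.aestronglyMeasurable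
      (ae_of_all _ fun z => Real.abs_sin_le_one _)).congr (ae_of_all _ fun z => ?_)
    rw [Pi.smul_apply', smul_smul, mul_comm, Function.uncurry_def]
  calc ∫ y in Set.Ioi (0 : ℝ), Real.exp (-(s * y)) • sineTransform φ y
      = ∫ y in Set.Ioi (0 : ℝ), ∫ t in Set.Ioi (0 : ℝ),
          (Real.exp (-(s * y)) * Real.sin (y * t)) • φ t := by
        simp only [sineTransform, mul_smul, integral_smul]
    _ = ∫ t in Set.Ioi (0 : ℝ), (t / (s ^ 2 + t ^ 2)) • φ t :=
        integral_integral_kernel_smul measurableSet_Ioi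
          (fun t _ => integral_exp_neg_mul_sin hs t) hint

theorem integrableOn_rpow_smul_sineTransform {b : ℝ} (hα : α < 2) (hbα : 1 < α + b)
    (hφ : IntegrableOn φ (Set.Ioi 0)) (hφ' : IntegrableOn (fun t => t • φ t) (Set.Ioi 0))
    (hb : sineTransform φ =O[atTop] fun y => y ^ (-b)) :
    IntegrableOn (fun y : ℝ => y ^ (-α) • sineTransform φ y) (Set.Ioi 0) := by
  have hcont := continuous_sineTransform hφ
  have hzero : sineTransform φ =O[𝓝[>] 0] fun y => y ^ (-(-1 : ℝ)) :=
    .of_bound (∫ t in Set.Ioi (0 : ℝ), ‖t • φ t‖) <| .of_forall fun y => by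
      simpa only [neg_neg, Real.rpow_one, mul_comm, Real.norm_eq_abs] using
        norm_sineTransform_le hφ' y
  have hnorm := mellin_convergent_of_isBigO_scalar (s := 1 - α)
    (hcont.norm.locallyIntegrable.locallyIntegrableOn _) hb.norm_left (by linarith)
    hzero.norm_left (by linarith)
  refine hnorm.mono' (by fun_prop) ?_
  filter_upwards [ae_restrict_mem measurableSet_Ioi] with y hy
  rw [norm_smul, Real.norm_of_nonneg (Real.rpow_nonneg (le_of_lt hy) _), sub_sub_cancel_left]

theorem integral_integral_rpow_mul_exp_neg_mul_smul [CompleteSpace E] (hα : 0 < α)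
    (hf : AEStronglyMeasurable f (volume.restrict (Set.Ioi 0)))
    (hαf : IntegrableOn (fun y : ℝ => y ^ (-α) • f y) (Set.Ioi 0)) :
    ∫ s in Set.Ioi (0 : ℝ), ∫ y in Set.Ioi (0 : ℝ), (s ^ (α - 1) * Real.exp (-(y * s))) • f y =
      Real.Gamma α • ∫ y in Set.Ioi (0 : ℝ), y ^ (-α) • f y := by
  have hk : ∀ y ∈ Set.Ioi (0 : ℝ), ∫ s in Set.Ioi (0 : ℝ), s ^ (α - 1) * Real.exp (-(y * s)) =
      Real.Gamma α * y ^ (-α) := fun y hy => integral_rpow_sub_one_mul_exp_neg_mul hα hy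
  rw [integral_integral_kernel_smul measurableSet_Ioi hk]
  · simp only [mul_smul, integral_smul]
  refine integrable_prod_nonneg_kernel_smul measurableSet_Ioi measurableSet_Ioi
    (by unfold Function.uncurry; fun_prop) (fun s hs y _ => ?_)
    (fun y hy => integrableOn_rpow_sub_one_mul_exp_neg_mul hα hy) hk hf ?_
  · exact mul_nonneg (Real.rpow_nonneg (le_of_lt hs) _) (Real.exp_nonneg _)
  · simpa only [IntegrableOn, mul_smul] using Integrable.fun_smul (Real.Gamma α) hαf

theorem integral_integral_rpow_mul_div_sq_add_sq_smul [CompleteSpace E] (hα : α ∈ Set.Ioo 0 2)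
    (hf : AEStronglyMeasurable f (volume.restrict (Set.Ioi 0)))
    (hαf : IntegrableOn (fun t : ℝ => t ^ (α - 1) • f t) (Set.Ioi 0)) :
    ∫ s in Set.Ioi (0 : ℝ), ∫ t in Set.Ioi (0 : ℝ), (s ^ (α - 1) * (t / (s ^ 2 + t ^ 2))) • f t =
      (1 / 2 * Real.Gamma (α / 2) * Real.Gamma (1 - α / 2)) •
        ∫ t in Set.Ioi (0 : ℝ), t ^ (α - 1) • f t := by
  have hk : ∀ t ∈ Set.Ioi (0 : ℝ), ∫ s in Set.Ioi (0 : ℝ), s ^ (α - 1) * (t / (s ^ 2 + t ^ 2)) =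
      1 / 2 * Real.Gamma (α / 2) * Real.Gamma (1 - α / 2) * t ^ (α - 1) := fun t ht =>
    integral_rpow_sub_one_mul_div_sq_add_sq hα ht
  rw [integral_integral_kernel_smul measurableSet_Ioi hk]
  · simp only [mul_smul, integral_smul]
  refine integrable_prod_nonneg_kernel_smul measurableSet_Ioi measurableSet_Ioi
    (by unfold Function.uncurry; fun_prop) (fun s hs t ht => ?_)
    (fun t ht => integrableOn_rpow_sub_one_mul_div_sq_add_sq hα ht) hk hf ?_
  · have hs' : 0 < s := hs
    have ht' : 0 < t := ht
    positivity
  · simpa only [IntegrableOn, mul_smul] using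
      Integrable.fun_smul (1 / 2 * Real.Gamma (α / 2) * Real.Gamma (1 - α / 2)) hαf

theorem Gamma_smul_integral_rpow_smul_sineTransform [CompleteSpace E] (hα : α ∈ Set.Ioo 0 2)
    (hφ : IntegrableOn φ (Set.Ioi 0))
    (hαφ : IntegrableOn (fun t : ℝ => t ^ (α - 1) • φ t) (Set.Ioi 0))
    (hS : IntegrableOn (fun y : ℝ => y ^ (-α) • sineTransform φ y) (Set.Ioi 0)) :
    Real.Gamma α • ∫ y in Set.Ioi (0 : ℝ), y ^ (-α) • sineTransform φ y =
      (1 / 2 * Real.Gamma (α / 2) * Real.Gamma (1 - α / 2)) •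
        ∫ t in Set.Ioi (0 : ℝ), t ^ (α - 1) • φ t := by
  calc Real.Gamma α • ∫ y in Set.Ioi (0 : ℝ), y ^ (-α) • sineTransform φ y
      = ∫ s in Set.Ioi (0 : ℝ), ∫ y in Set.Ioi (0 : ℝ),
          (s ^ (α - 1) * Real.exp (-(y * s))) • sineTransform φ y :=
        (integral_integral_rpow_mul_exp_neg_mul_smul hα.1
          (continuous_sineTransform hφ).aestronglyMeasurable hS).symm
    _ = ∫ s in Set.Ioi (0 : ℝ), ∫ t in Set.Ioi (0 : ℝ),
          (s ^ (α - 1) * (t / (s ^ 2 + t ^ 2))) • φ t :=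
        setIntegral_congr_fun measurableSet_Ioi fun s hs => by
          simp only [mul_smul, integral_smul, mul_comm _ s]
          rw [integral_exp_neg_mul_smul_sineTransform hφ hs]
    _ = (1 / 2 * Real.Gamma (α / 2) * Real.Gamma (1 - α / 2)) •
          ∫ t in Set.Ioi (0 : ℝ), t ^ (α - 1) • φ t :=
        integral_integral_rpow_mul_div_sq_add_sq_smul hα hφ.1 hαφ

theorem cFrac_div_mul_Gamma_mul_Gamma (hα : α ∈ Set.Ioo 0 2) :
    cFrac α / α * (Real.Gamma (α / 2) * Real.Gamma (1 - α / 2)) = Real.Gamma α := by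
  have hα_ne : α ≠ 0 := hα.1.ne'
  have hGamma_ne : Real.Gamma (1 - α / 2) ≠ 0 :=
    (Real.Gamma_pos_of_pos (by linarith [hα.2])).ne'
  have hpow : (2 : ℝ) ^ (α - 1) * 2 ^ (1 - α) = 1 := by
    rw [← Real.rpow_add two_pos, sub_add_sub_cancel, sub_self, Real.rpow_zero]
  have hduplication : Real.Gamma (α / 2) * Real.Gamma (1 / 2 + α / 2) =
      Real.Gamma α * 2 ^ (1 - α) * √Real.pi := by
    simpa only [mul_div_cancel₀ α two_ne_zero, add_comm] using Real.Gamma_mul_Gamma_add_half (α / 2)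
  calc cFrac α / α * (Real.Gamma (α / 2) * Real.Gamma (1 - α / 2))
      = 2 ^ (α - 1) * (Real.Gamma (α / 2) * Real.Gamma (1 / 2 + α / 2)) / √Real.pi := by
        unfold cFrac
        generalize Real.Gamma (1 - α / 2) = G at hGamma_ne ⊢
        field_simp
    _ = 2 ^ (α - 1) * 2 ^ (1 - α) * Real.Gamma α := by
        rw [hduplication]
        field_simp
    _ = Real.Gamma α := by rw [hpow, one_mul]

theorem cFrac_div_smul_integral_rpow_smul_sineTransform [CompleteSpace E] (hα : α ∈ Set.Ioo 0 2)
    (hφ : IntegrableOn φ (Set.Ioi 0))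
    (hαφ : IntegrableOn (fun t : ℝ => t ^ (α - 1) • φ t) (Set.Ioi 0))
    (hS : IntegrableOn (fun y : ℝ => y ^ (-α) • sineTransform φ y) (Set.Ioi 0)) :
    (cFrac α / α) • ∫ y in Set.Ioi (0 : ℝ), y ^ (-α) • sineTransform φ y =
      (1 / 2 : ℝ) • ∫ t in Set.Ioi (0 : ℝ), t ^ (α - 1) • φ t := by
  have hGamma_ne : Real.Gamma α ≠ 0 := (Real.Gamma_pos_of_pos hα.1).ne'
  refine smul_right_injective E hGamma_ne ?_
  simp only
  rw [smul_comm, Gamma_smul_integral_rpow_smul_sineTransform hα hφ hαφ hS, smul_smul, smul_smul,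
    ← cFrac_div_mul_Gamma_mul_Gamma hα]
  ring_nf

end SineTransform

section GammaKernel

/-- The integrand `t ↦ t ^ (a - 1) * exp (-w * t)` of the Gamma integral `Γ(a) w ^ (-a)` at a
complex frequency `w`; the power of `t` is real, so no branch choice enters. -/
noncomputable def gammaKernel (a : ℝ) (w : ℂ) (t : ℝ) : ℂ :=
  ((t ^ (a - 1) : ℝ) : ℂ) * Complex.exp (-(w * t))

variable {a α : ℝ} {w : ℂ} {t : ℝ}

@[fun_prop]
theorem measurable_gammaKernel (a : ℝ) (w : ℂ) : Measurable (gammaKernel a w) := by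
  unfold gammaKernel
  fun_prop

theorem norm_gammaKernel (a : ℝ) (w : ℂ) (ht : 0 < t) :
    ‖gammaKernel a w t‖ = t ^ (a - 1) * Real.exp (-(w.re * t)) := by
  rw [gammaKernel, norm_mul, Complex.norm_real, Complex.norm_exp,
    Real.norm_of_nonneg (Real.rpow_nonneg ht.le _), Complex.neg_re, Complex.re_mul_ofReal]

theorem rpow_smul_gammaKernel (a b : ℝ) (w : ℂ) (ht : 0 < t) :
    t ^ b • gammaKernel a w t = gammaKernel (a + b) w t := by
  rw [gammaKernel, gammaKernel, Complex.real_smul, ← mul_assoc, ← Complex.ofReal_mul,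
    ← Real.rpow_add ht, add_sub_right_comm, add_comm]

theorem smul_gammaKernel (a : ℝ) (w : ℂ) (ht : 0 < t) :
    t • gammaKernel a w t = gammaKernel (a + 1) w t := by
  rw [← rpow_smul_gammaKernel a 1 w ht, Real.rpow_one]

theorem integrableOn_gammaKernel (ha : 0 < a) (hw : 0 < w.re) :
    IntegrableOn (gammaKernel a w) (Set.Ioi 0) :=
  (integrable_norm_iff (measurable_gammaKernel a w).aestronglyMeasurable).1 <|
    (integrableOn_congr_fun (fun _ ht => norm_gammaKernel a w ht) measurableSet_Ioi).2 <|
      integrableOn_rpow_sub_one_mul_exp_neg_mul ha hw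

theorem hasDerivAt_gammaKernel (a : ℝ) (w : ℂ) (ht : 0 < t) :
    HasDerivAt (fun z => gammaKernel a z t) (-gammaKernel (a + 1) w t) w := by
  have hexp : HasDerivAt (fun z : ℂ => Complex.exp (-(z * t))) (Complex.exp (-(w * t)) * -t) w :=
    (hasDerivAt_mul_const (t : ℂ)).neg.cexp
  refine (hexp.const_mul ((t ^ (a - 1) : ℝ) : ℂ)).congr_deriv ?_
  rw [← smul_gammaKernel a w ht, gammaKernel, Complex.real_smul]
  ring

theorem hasDerivAt_integral_gammaKernel (ha : 0 < a) (hw : 0 < w.re) :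
    HasDerivAt (fun z => ∫ t in Set.Ioi (0 : ℝ), gammaKernel a z t)
      (∫ t in Set.Ioi (0 : ℝ), -gammaKernel (a + 1) w t) w := by
  have hhalf : 0 < w.re / 2 := half_pos hw
  have hmem : {z : ℂ | w.re / 2 < z.re} ∈ 𝓝 w :=
    (isOpen_lt continuous_const Complex.continuous_re).mem_nhds (half_lt_self hw)
  refine (hasDerivAt_integral_of_dominated_loc_of_deriv_le hmem
    (F' := fun z t => -gammaKernel (a + 1) z t)
    (bound := fun t => t ^ (a + 1 - 1) * Real.exp (-(w.re / 2 * t)))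
    (.of_forall fun z => (measurable_gammaKernel a z).aestronglyMeasurable)
    (integrableOn_gammaKernel ha hw) (measurable_gammaKernel _ w).neg.aestronglyMeasurable ?_
    (integrableOn_rpow_sub_one_mul_exp_neg_mul (by linarith) hhalf) ?_).2
  · filter_upwards [ae_restrict_mem measurableSet_Ioi] with t ht z hz
    rw [norm_neg, norm_gammaKernel _ _ ht]
    have ht' : 0 < t := ht
    gcongr
  · filter_upwards [ae_restrict_mem measurableSet_Ioi] with t ht z _
    exact hasDerivAt_gammaKernel a z ht

theorem integral_gammaKernel_ofReal (ha : 0 < a) {r : ℝ} (hr : 0 < r) :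
    ∫ t in Set.Ioi (0 : ℝ), gammaKernel a r t = Real.Gamma a * (r : ℂ) ^ (-(a : ℂ)) := by
  have hkernel : ∀ t : ℝ, gammaKernel a r t = ((t ^ (a - 1) * Real.exp (-(r * t)) : ℝ) : ℂ) :=
    fun t => by simp only [gammaKernel, Complex.ofReal_mul, Complex.ofReal_exp, Complex.ofReal_neg]
  simp only [hkernel, integral_complex_ofReal]
  rw [integral_rpow_sub_one_mul_exp_neg_mul ha hr, Complex.ofReal_mul, Complex.ofReal_cpow hr.le,
    Complex.ofReal_neg]

-- Both sides are holomorphic in the right half-plane and agree on the positive reals.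
theorem integral_gammaKernel (ha : 0 < a) (hw : 0 < w.re) :
    ∫ t in Set.Ioi (0 : ℝ), gammaKernel a w t = Real.Gamma a * w ^ (-(a : ℂ)) := by
  have hopen : IsOpen {z : ℂ | 0 < z.re} := isOpen_lt continuous_const Complex.continuous_re
  have hintegral : DifferentiableOn ℂ (fun z => ∫ t in Set.Ioi (0 : ℝ), gammaKernel a z t)
      {z : ℂ | 0 < z.re} := fun z hz =>
    (hasDerivAt_integral_gammaKernel ha hz).differentiableAt.differentiableWithinAt
  have hcpow : DifferentiableOn ℂ (fun z : ℂ => Real.Gamma a * z ^ (-(a : ℂ))) {z : ℂ | 0 < z.re} :=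
    fun z hz => ((differentiableAt_id.cpow_const (Or.inl hz)).const_mul _).differentiableWithinAt
  have hreal : Tendsto (fun r : ℝ => (r : ℂ)) (𝓝[>] 1) (𝓝[≠] 1) :=
    tendsto_nhdsWithin_of_tendsto_nhds_of_eventually_within _
      (Complex.continuous_ofReal.tendsto' 1 1 Complex.ofReal_one |>.mono_left nhdsWithin_le_nhds)
      (eventually_mem_nhdsWithin.mono fun r hr => by
        simpa only [Set.mem_compl_iff, Set.mem_singleton_iff, Complex.ofReal_eq_one] using
          ne_of_gt hr)
  refine (hintegral.analyticOnNhd hopen).eqOn_of_preconnected_of_frequently_eq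
    (hcpow.analyticOnNhd hopen) (convex_halfSpace_re_gt 0).isPreconnected (z₀ := 1)
    (by simp only [Set.mem_ofPred_eq, Complex.one_re, zero_lt_one]) ?_ hw
  refine hreal.frequently (Eventually.frequently ?_)
  filter_upwards [eventually_mem_nhdsWithin] with r hr using
    integral_gammaKernel_ofReal ha (zero_lt_one.trans hr)

theorem sin_smul_gammaKernel (a : ℝ) (w : ℂ) (y t : ℝ) :
    Real.sin (y * t) • gammaKernel a w t = Complex.I / 2 *
      (gammaKernel a (w + Complex.I * y) t - gammaKernel a (w - Complex.I * y) t) := by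
  have hplus : -((w + Complex.I * y) * t) = -(w * t) + -(y * t) * Complex.I := by ring
  have hminus : -((w - Complex.I * y) * t) = -(w * t) + y * t * Complex.I := by ring
  simp only [gammaKernel, hplus, hminus, Complex.exp_add, Complex.real_smul, Complex.ofReal_sin,
    Complex.ofReal_mul, Complex.sin]
  ring

theorem sineTransform_gammaKernel (ha : 0 < a) (hw : 0 < w.re) (y : ℝ) :
    sineTransform (gammaKernel a w) y = Real.Gamma a * (Complex.I / 2) *
      ((w + Complex.I * y) ^ (-(a : ℂ)) - (w - Complex.I * y) ^ (-(a : ℂ))) := by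
  have hplus : 0 < (w + Complex.I * y).re := by simpa using hw
  have hminus : 0 < (w - Complex.I * y).re := by simpa using hw
  simp only [sineTransform, sin_smul_gammaKernel, integral_const_mul]
  rw [integral_sub (integrableOn_gammaKernel ha hplus) (integrableOn_gammaKernel ha hminus),
    integral_gammaKernel ha hplus, integral_gammaKernel ha hminus]
  ring

theorem cpow_neg_sub_cpow_neg_eq_sineTransform (ha : 0 < a) (hw : 0 < w.re) (y : ℝ) :
    (w - Complex.I * y) ^ (-(a : ℂ)) - (w + Complex.I * y) ^ (-(a : ℂ)) =
      2 * Complex.I / Real.Gamma a * sineTransform (gammaKernel a w) y := by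
  have hGamma_ne : (Real.Gamma a : ℂ) ≠ 0 := Complex.ofReal_ne_zero.2 (Real.Gamma_pos_of_pos ha).ne'
  rw [sineTransform_gammaKernel ha hw]
  field_simp
  rw [Complex.I_sq]
  ring

theorem isBigO_add_mul_cpow_neg (w : ℂ) {c : ℂ} (hc : c ≠ 0) (a : ℝ) :
    (fun y : ℝ => (w + c * y) ^ (-(a : ℂ))) =O[atTop] fun y => y ^ (-a) := by
  have hlinear : (fun y : ℝ => c * (y : ℂ)) =Θ[atTop] fun y : ℝ => y :=
    (isTheta_const_mul_left hc).2 (.of_norm_eventuallyEq_norm (.of_forall Complex.norm_real))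
  have hconst : (fun _ : ℝ => w) =o[atTop] fun y : ℝ => c * (y : ℂ) :=
    (isLittleO_const_id_atTop w).trans_isTheta hlinear.symm
  have htheta : (fun y : ℝ => ‖w + c * (y : ℂ)‖) =Θ[atTop] fun y : ℝ => y :=
    ((hconst.add_isTheta (isTheta_refl _ _)).trans hlinear).norm_left
  refine .of_norm_left ((htheta.rpow (.of_forall fun y => norm_nonneg _)
    (eventually_ge_atTop 0)).isBigO.congr_left fun y => ?_)
  rw [← Complex.ofReal_neg, Complex.norm_cpow_real]

theorem integrableOn_rpow_smul_sineTransform_gammaKernel (ha : 0 < a) (hα : α < 2)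
    (haα : 1 < a + α) (hw : 0 < w.re) :
    IntegrableOn (fun y : ℝ => y ^ (-α) • sineTransform (gammaKernel a w) y) (Set.Ioi 0) := by
  have hint : IntegrableOn (fun t => t • gammaKernel a w t) (Set.Ioi 0) :=
    (integrableOn_congr_fun (fun _ ht => smul_gammaKernel a w ht) measurableSet_Ioi).2
      (integrableOn_gammaKernel (by linarith) hw)
  refine integrableOn_rpow_smul_sineTransform (b := a) hα (by linarith)
    (integrableOn_gammaKernel ha hw) hint ?_
  simp only [funext (sineTransform_gammaKernel ha hw), sub_eq_add_neg w, ← neg_mul]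
  exact ((isBigO_add_mul_cpow_neg w Complex.I_ne_zero a).sub
    (isBigO_add_mul_cpow_neg w (neg_ne_zero.2 Complex.I_ne_zero) a)).const_mul_left _

end GammaKernel

section HasFracLap

/-- `HasFracLap α v x L`: a function with derivative `v` has fractional Laplacian
`(-Δ) ^ (α / 2)` equal to `L` at `x`, the defining integral being absolutely convergent. -/
def HasFracLap (α : ℝ) (v : ℝ → ℂ) (x : ℝ) (L : ℂ) : Prop :=
  IntegrableOn (fun y : ℝ => (v (x - y) - v (x + y)) * ((y ^ (-α) : ℝ) : ℂ)) (Set.Ioi 0) ∧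
  ((cFrac α / α : ℝ) : ℂ) *
      ∫ y in Set.Ioi (0 : ℝ), (v (x - y) - v (x + y)) * ((y ^ (-α) : ℝ) : ℂ) = L

variable {α x : ℝ}

theorem HasFracLap.const_mul {v : ℝ → ℂ} {L : ℂ} (c : ℂ) (h : HasFracLap α v x L) :
    HasFracLap α (fun z => c * v z) x (c * L) := by
  have hdiff : ∀ y : ℝ, (c * v (x - y) - c * v (x + y)) * ((y ^ (-α) : ℝ) : ℂ) =
      c * ((v (x - y) - v (x + y)) * ((y ^ (-α) : ℝ) : ℂ)) := fun y => by ring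
  simp only [HasFracLap, hdiff, integral_const_mul]
  exact ⟨h.1.const_mul c, by rw [mul_left_comm, h.2]⟩

theorem HasFracLap.sum {ι : Type*} {s : Finset ι} {v : ι → ℝ → ℂ} {L : ι → ℂ}
    (h : ∀ i ∈ s, HasFracLap α (v i) x (L i)) :
    HasFracLap α (fun z => ∑ i ∈ s, v i z) x (∑ i ∈ s, L i) := by
  simp only [HasFracLap, ← Finset.sum_sub_distrib, Finset.sum_mul]
  refine ⟨integrable_finsetSum s fun i hi => (h i hi).1, ?_⟩
  rw [integral_finsetSum s fun i hi => (h i hi).1, Finset.mul_sum]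
  exact Finset.sum_congr rfl fun i hi => (h i hi).2

theorem HasFracLap.neg_comp_neg {v : ℝ → ℂ} {L : ℂ} (h : HasFracLap α v (-x) L) :
    HasFracLap α (fun z => -v (-z)) x L := by
  have hdiff : ∀ y : ℝ, -v (-(x - y)) - -v (-(x + y)) = v (-x - y) - v (-x + y) := fun y => by
    rw [neg_sub_neg, neg_add', neg_sub, sub_eq_neg_add y]
  simpa only [HasFracLap, hdiff] using h

theorem hasFracLap_cpow_neg {a : ℝ} {w : ℂ} (ha : 0 < a) (hα : α ∈ Set.Ioo 0 2) (haα : 1 < a + α)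
    (hw : 0 < w.re) (x : ℝ) :
    HasFracLap α (fun z : ℝ => (Complex.I * z + w) ^ (-(a : ℂ))) x
      (Complex.I * (Real.Gamma (a + (α - 1)) / Real.Gamma a) *
        (Complex.I * x + w) ^ (-((a + (α - 1) : ℝ) : ℂ))) := by
  have hw' : 0 < (Complex.I * x + w).re := by simpa using hw
  have hdiff : ∀ y : ℝ, ((Complex.I * (x - y : ℝ) + w) ^ (-(a : ℂ)) -
      (Complex.I * (x + y : ℝ) + w) ^ (-(a : ℂ))) * ((y ^ (-α) : ℝ) : ℂ) =
      2 * Complex.I / Real.Gamma a *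
        y ^ (-α) • sineTransform (gammaKernel a (Complex.I * x + w)) y := fun y => by
    rw [Complex.ofReal_sub, Complex.ofReal_add, mul_sub, mul_add, sub_add_eq_add_sub,
      add_right_comm, cpow_neg_sub_cpow_neg_eq_sineTransform ha hw', Complex.real_smul]
    ring
  have hpow : Set.EqOn (fun t : ℝ => t ^ (α - 1) • gammaKernel a (Complex.I * x + w) t)
      (gammaKernel (a + (α - 1)) (Complex.I * x + w)) (Set.Ioi 0) :=
    fun _ ht => rpow_smul_gammaKernel a (α - 1) _ ht
  have hsine := integrableOn_rpow_smul_sineTransform_gammaKernel ha hα.2 haα hw'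
  have hmain := cFrac_div_smul_integral_rpow_smul_sineTransform hα
    (integrableOn_gammaKernel ha hw') ((integrableOn_congr_fun hpow measurableSet_Ioi).2
      (integrableOn_gammaKernel (by linarith) hw')) hsine
  rw [setIntegral_congr_fun measurableSet_Ioi hpow, integral_gammaKernel (by linarith) hw',
    Complex.real_smul, Complex.real_smul] at hmain
  simp only [HasFracLap, hdiff, integral_const_mul]
  refine ⟨hsine.const_mul _, ?_⟩
  rw [mul_left_comm, hmain]
  push_cast
  ring

end HasFracLap

section GeneralizedBinomial

theorem gbinom_natCast (n k : ℕ) : gbinom n k = n.choose k := by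
  rw [gbinom, ← descPochhammer_eval_eq_prod_range, descPochhammer_eval_eq_descFactorial,
    Nat.descFactorial_eq_factorial_mul_choose, Nat.cast_mul,
    mul_div_cancel_left₀ _ (Nat.cast_ne_zero.2 k.factorial_ne_zero)]

theorem add_one_mul_gbinom_succ (z : ℂ) (k : ℕ) :
    (k + 1) * gbinom z (k + 1) = (z - k) * gbinom z k := by
  have hk : (k : ℂ) + 1 ≠ 0 := k.cast_add_one_ne_zero
  rw [gbinom, gbinom, prod_range_succ, Nat.factorial_succ]
  push_cast
  field_simp

theorem Gamma_add_natCast_eq_gbinom {s : ℝ} (hs : 0 < s) (k : ℕ) :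
    (Real.Gamma (s + k) : ℂ) = (-1) ^ k * k.factorial * Real.Gamma s * gbinom (-s) k := by
  induction k with
  | zero => simp [gbinom]
  | succ k ih =>
    have hk : s + k ≠ 0 := by positivity
    rw [Nat.cast_succ, ← add_assoc, Real.Gamma_add_one hk, Complex.ofReal_mul, ih,
      Nat.factorial_succ, Complex.ofReal_add, Complex.ofReal_natCast]
    push_cast
    linear_combination (-1) ^ k * k.factorial * (Real.Gamma s : ℂ) *
      add_one_mul_gbinom_succ (-s) k

end GeneralizedBinomial

section Higgins

theorem I_mul_ofReal_add_one_ne_zero (x : ℝ) : Complex.I * (x : ℂ) + 1 ≠ 0 := fun h => by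
  simpa using congrArg Complex.re h

theorem higgins_natCast (N : ℕ) (x : ℝ) :
    higgins N x = ∑ k ∈ range (N + 1), N.choose k * (-2) ^ k * ((Complex.I * x + 1) ^ k)⁻¹ := by
  have hx := I_mul_ofReal_add_one_ne_zero x
  have hbase : (Complex.I * x - 1) / (Complex.I * x + 1) = -2 * (Complex.I * x + 1)⁻¹ + 1 := by
    field_simp
    ring
  rw [higgins, zpow_natCast, hbase, add_pow]
  refine sum_congr rfl fun k _ => ?_
  rw [mul_pow, inv_pow, one_pow, mul_one, mul_comm, ← mul_assoc]

theorem hasDerivAt_inv_I_mul_add_one_pow (k : ℕ) (x : ℝ) :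
    HasDerivAt (fun z : ℝ => ((Complex.I * z + 1) ^ k)⁻¹)
      (-(k * Complex.I) * ((Complex.I * x + 1) ^ (k + 1))⁻¹) x := by
  have hx := I_mul_ofReal_add_one_ne_zero x
  have hlinear : HasDerivAt (fun z : ℝ => Complex.I * (z : ℂ) + 1) (Complex.I * 1) x :=
    (Complex.ofRealCLM.hasDerivAt.const_mul Complex.I).add_const 1
  have hzpow := (hasDerivAt_zpow (-k : ℤ) _ (.inl hx)).comp x hlinear
  simp only [Function.comp_def, zpow_neg, zpow_natCast] at hzpow
  have hpow : (Complex.I * x + 1) ^ (-k - 1 : ℤ) = ((Complex.I * x + 1) ^ (k + 1))⁻¹ := by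
    rw [← neg_add', zpow_neg, ← Nat.cast_succ, zpow_natCast]
  refine hzpow.congr_deriv ?_
  rw [hpow, Int.cast_neg, Int.cast_natCast]
  ring

theorem higgins'_natCast (N : ℕ) (x : ℝ) :
    higgins' N x = ∑ k ∈ range N, (-((k + 1) * N.choose (k + 1) * (-2) ^ (k + 1) * Complex.I)) *
      ((Complex.I * x + 1) ^ (k + 2))⁻¹ := by
  rw [higgins', funext (higgins_natCast N)]
  refine (HasDerivAt.fun_sum fun k _ =>
    (hasDerivAt_inv_I_mul_add_one_pow k x).const_mul _).deriv.trans ?_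
  rw [sum_range_succ']
  simp only [Nat.cast_zero, zero_mul, neg_zero, mul_zero, add_zero]
  refine sum_congr rfl fun k _ => ?_
  push_cast
  ring

theorem higgins_neg (n : ℤ) (x : ℝ) : higgins (-n) x = higgins n (-x) := by
  have hsub : Complex.I * (-x : ℝ) - 1 = -(Complex.I * x + 1) := by push_cast; ring
  have hadd : Complex.I * (-x : ℝ) + 1 = -(Complex.I * x - 1) := by push_cast; ring
  rw [higgins, higgins, hsub, hadd, neg_div_neg_eq, zpow_neg, ← inv_zpow, inv_div]

theorem higgins'_neg (n : ℤ) (x : ℝ) : higgins' (-n) x = -higgins' n (-x) := by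
  rw [higgins', higgins', funext (higgins_neg n), deriv_comp_neg]

theorem hasFracLap_inv_pow {α : ℝ} {w : ℂ} (hα : α ∈ Set.Ioo 0 2) (hw : 0 < w.re) (k : ℕ) (x : ℝ) :
    HasFracLap α (fun z : ℝ => ((Complex.I * z + w) ^ (k + 2))⁻¹) x
      (Complex.I * (-1) ^ k / (k + 1) * Real.Gamma (1 + α) * gbinom (-1 - α) k /
        ((Complex.I * x + w) ^ (1 + α : ℂ) * (Complex.I * x + w) ^ k)) := by
  have hre : 0 < (Complex.I * x + w).re := by simpa using hw
  have hx : Complex.I * x + w ≠ 0 := fun h => by simp [h] at hre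
  have hfactorial : (k.factorial : ℂ) ≠ 0 := Nat.cast_ne_zero.2 k.factorial_ne_zero
  have hGamma : Real.Gamma ((k + 2 : ℕ) : ℝ) = (k + 1).factorial := by
    exact_mod_cast Real.Gamma_nat_eq_factorial (k + 1)
  have hk : ((k + 2 : ℕ) : ℝ) + (α - 1) = 1 + α + k := by push_cast; ring
  have hmain := hasFracLap_cpow_neg (a := (k + 2 : ℕ)) (by positivity) hα
    (by push_cast; linarith [hα.1, (k.cast_nonneg : (0 : ℝ) ≤ k)]) hw x
  simp only [Complex.ofReal_natCast, Complex.cpow_neg, Complex.cpow_natCast] at hmain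
  convert hmain using 1
  rw [hk, hGamma, Gamma_add_natCast_eq_gbinom (by linarith [hα.1]), Nat.factorial_succ]
  push_cast
  rw [Complex.cpow_add (1 + α : ℂ) k hx, Complex.cpow_natCast, neg_add']
  field_simp

theorem hasFracLap_higgins'_natCast {α : ℝ} (hα : α ∈ Set.Ioo 0 2) (N : ℕ) (x : ℝ) :
    HasFracLap α (higgins' N) x
      (-(2 * Real.Gamma (1 + α) / (Complex.I * x + 1) ^ (1 + α : ℂ)) * ∑ k ∈ range N,
        gbinom N (k + 1) * gbinom (-1 - α) k * (2 / (Complex.I * x + 1)) ^ k) := by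
  have hsum := HasFracLap.sum (s := range N) fun k _ =>
    (hasFracLap_inv_pow hα (w := 1) (by simp) k x).const_mul
      (-((k + 1) * N.choose (k + 1) * (-2) ^ (k + 1) * Complex.I))
  rw [funext (higgins'_natCast N)]
  convert hsum using 1
  rw [mul_sum]
  refine sum_congr rfl fun k _ => ?_
  have hk : (k : ℂ) + 1 ≠ 0 := k.cast_add_one_ne_zero
  have hcoeff : -((k + 1) * N.choose (k + 1) * (-2) ^ (k + 1) * Complex.I) *
      (Complex.I * (-1) ^ k / (k + 1)) = -2 * N.choose (k + 1) * 2 ^ k := by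
    have hsign : (-2 : ℂ) ^ (k + 1) * (-1) ^ k = -2 * 2 ^ k := by
      rw [pow_succ', mul_assoc, ← mul_pow, neg_mul_neg, mul_one]
    field_simp
    linear_combination -N.choose (k + 1) * Complex.I ^ 2 * hsign +
      2 * N.choose (k + 1) * 2 ^ k * Complex.I_sq
  rw [gbinom_natCast, div_pow]
  linear_combination -(Real.Gamma (1 + α) * gbinom (-1 - α) k /
    ((Complex.I * x + 1) ^ (1 + α : ℂ) * (Complex.I * x + 1) ^ k)) * hcoeff

end Higgins

theorem fracLap_higgins (α : ℝ) (hα : α ∈ Set.Ioo (0 : ℝ) 2) (n : ℤ) (hn : n ≠ 0) (x : ℝ) :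
    IntegrableOn (fun y : ℝ =>
        (higgins' n (x - y) - higgins' n (x + y)) * ((y ^ (-α) : ℝ) : ℂ)) (Set.Ioi 0) ∧
    ((cFrac α / α : ℝ) : ℂ) *
        ∫ y in Set.Ioi (0 : ℝ),
          (higgins' n (x - y) - higgins' n (x + y)) * ((y ^ (-α) : ℝ) : ℂ) =
      -(2 * (Real.Gamma (1 + α) : ℂ) /
            (Complex.I * (n.sign : ℂ) * (x : ℂ) + 1) ^ ((1 : ℂ) + (α : ℂ))) *
        ∑ k ∈ Finset.range n.natAbs,
          gbinom (n.natAbs : ℂ) (k + 1) * gbinom (-1 - (α : ℂ)) k *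
            (2 / (Complex.I * (n.sign : ℂ) * (x : ℂ) + 1)) ^ k := by
  obtain ⟨N, rfl | rfl⟩ := n.eq_nat_or_neg
  · have hsign : (N : ℤ).sign = 1 := Int.sign_natCast_of_ne_zero (Nat.cast_ne_zero.1 hn)
    simpa only [HasFracLap, hsign, Int.natAbs_natCast, Int.cast_one, mul_one] using
      hasFracLap_higgins'_natCast hα N x
  · have hsign : (-(N : ℤ)).sign = -1 := by
      rw [Int.sign_neg, Int.sign_natCast_of_ne_zero (Nat.cast_ne_zero.1 (neg_ne_zero.1 hn))]
    simpa only [HasFracLap, ← higgins'_neg, hsign, Int.natAbs_neg, Int.natAbs_natCast, Int.cast_neg,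
      Int.cast_one, Complex.ofReal_neg, neg_mul, mul_neg, mul_one] using
      (hasFracLap_higgins'_natCast hα N (-x)).neg_comp_neg
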